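/- Let H₀ > 0, let T : (0, H₀] → ℝ be continuous with T₀ ≤ T(h) ≤ T₁ (1 + |log h|) for all h ∈ (0, H₀], where T₀, T₁ > 0, and let p : [0, H₀) → ℝ be continuous and positive with c₁ (H₀ − h) ≤ p(h) ≤ c₂ (H₀ − h) for all h ∈ [H₀/2, H₀), where c₁, c₂ > 0. Then there exists λ̄* ∈ (0, ∞) such that: for every λ ∈ [0, λ̄*) there exists a bounded nonnegative function φ̄ on [0, H₀), C¹ on (0, H₀) with p φ̄' differentiable there, satisfying −(d/dh)(p(h) φ̄'(h)) = λ T(h) g(φ̄(h)) on (0, H₀), φ̄(0) = 0, φ̄ > 0 on (0,H₀) when λ > 0, and φ̄' bounded on (0, H₀); and for every λ > λ̄* no such positive solution exists. -/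

import Mathlib

open Set MeasureTheory

noncomputable section

/-- A solution of the effective Freidlin problem
`-(p φ')' = λ T g(φ)` on `(0, H₀)` with `φ(0) = 0`, `φ` bounded and nonnegative on
`[0, H₀)`, `φ` of class `C¹` on `(0, H₀)` with `p φ'` differentiable there, and `φ'`
bounded on `(0, H₀)`. -/
def IsFreidlinSol (H₀ : ℝ) (T p g : ℝ → ℝ) (lam : ℝ) (φ : ℝ → ℝ) : Prop :=
  (∃ M : ℝ, ∀ h ∈ Ico (0 : ℝ) H₀, |φ h| ≤ M) ∧
  (∀ h ∈ Ico (0 : ℝ) H₀, 0 ≤ φ h) ∧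
  (∀ h ∈ Ioo (0 : ℝ) H₀, DifferentiableAt ℝ φ h) ∧
  (∀ h ∈ Ioo (0 : ℝ) H₀, ContinuousAt (deriv φ) h) ∧
  (∀ h ∈ Ioo (0 : ℝ) H₀, DifferentiableAt ℝ (fun t => p t * deriv φ t) h) ∧
  (∀ h ∈ Ioo (0 : ℝ) H₀, -deriv (fun t => p t * deriv φ t) h = lam * T h * g (φ h)) ∧
  φ 0 = 0 ∧
  (∃ K : ℝ, ∀ h ∈ Ioo (0 : ℝ) H₀, |deriv φ h| ≤ K)

/-!
Integrating `-(p φ')' = λ T g(φ)` twice (the flux `p φ'` vanishes at `H` because `p` does and `φ'`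
is bounded) turns the problem into the fixed point equation `φ = λ 𝒢[g ∘ φ]`, where
`𝒢[q](h) = ∫₀ʰ (∫ₛᴴ T q) / p(s) ds` is an order preserving operator.

A nondecreasing supersolution has a fixed point below it by the Knaster–Tarski argument: restricting
to nondecreasing functions makes suprema measurable for free. Constants are supersolutions for small
`λ`, and a solution for `λ` is a supersolution for every smaller parameter, so the admissible
parameters form an interval. It is bounded: a solution is nondecreasing, hence
`φ' / g(φ) ≥ λ 𝒢[1]'`, and integrating gives `λ 𝒢[1] ≤ ∫₀^∞ ds / g(s)`.
-/

open Filter Topology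

/-- The order interval `[a, b]` of functions that are nondecreasing on `s`, with the bounds imposed
only on `s`. -/
def monotoneBetween {X β : Type*} [Preorder X] [Preorder β] (s : Set X) (a b : X → β) :
    Set (X → β) :=
  {f | MonotoneOn f s ∧ ∀ x ∈ s, f x ∈ Icc (a x) (b x)}

theorem exists_fixedPoint_of_mapsTo_monotoneBetween {X β : Type*} [Preorder X]
    [ConditionallyCompleteLattice β] {s : Set X} {a b : X → β} {F : (X → β) → X → β}
    (ha : a ∈ monotoneBetween s a b)
    (hF : MapsTo F (monotoneBetween s a b) (monotoneBetween s a b))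
    (hmono : ∀ f ∈ monotoneBetween s a b, ∀ f' ∈ monotoneBetween s a b,
      (∀ x ∈ s, f x ≤ f' x) → ∀ x ∈ s, F f x ≤ F f' x) :
    ∃ f ∈ monotoneBetween s a b, ∀ x ∈ s, F f x = f x := by
  let P : Set (X → β) := {f ∈ monotoneBetween s a b | ∀ x ∈ s, f x ≤ F f x}
  have haP : a ∈ P := ⟨ha, fun x hx => ((hF ha).2 x hx).1⟩
  have : Nonempty P := ⟨⟨a, haP⟩⟩
  let u : X → β := fun x => ⨆ f : P, f.1 x
  have bdd : ∀ x ∈ s, BddAbove (range fun f : P => f.1 x) := fun x hx =>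
    ⟨b x, forall_mem_range.2 fun f => (f.2.1.2 x hx).2⟩
  have le_u : ∀ f ∈ P, ∀ x ∈ s, f x ≤ u x := fun f hf x hx => le_ciSup (bdd x hx) ⟨f, hf⟩
  have hu : u ∈ monotoneBetween s a b :=
    ⟨fun x hx y hy hxy => ciSup_mono (bdd y hy) fun f => f.2.1.1 hx hy hxy,
      fun x hx => ⟨le_u a haP x hx, ciSup_le fun f => (f.2.1.2 x hx).2⟩⟩
  have u_le : ∀ x ∈ s, u x ≤ F u x := fun x hx =>
    ciSup_le fun f => (f.2.2 x hx).trans (hmono f f.2.1 u hu (le_u f f.2) x hx)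
  have hFu : F u ∈ P := ⟨hF hu, hmono u hu _ (hF hu) u_le⟩
  exact ⟨u, hu, fun x hx => (le_u _ hFu x hx).antisymm (u_le x hx)⟩

theorem intervalIntegrable_of_integrableOn_Ioo {E : Type*} [NormedAddCommGroup E] {f : ℝ → E}
    {a b x y : ℝ} (hf : IntegrableOn f (Ioo a b)) (hx : x ∈ Icc a b) (hy : y ∈ Icc a b) :
    IntervalIntegrable f volume x y :=
  have hf' : IntegrableOn f (Icc a b) := by rwa [integrableOn_Icc_iff_integrableOn_Ioo]
  (hf'.mono_set (uIcc_subset_Icc hx hy)).intervalIntegrable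

/-- The linear data of the problem: a positive integrable weight `T` and a positive coefficient `p`
degenerating at `H`. The tail bound is what makes `φ'` bounded near `H`. -/
structure IsFreidlinWeight (H : ℝ) (T p : ℝ → ℝ) : Prop where
  pos : 0 < H
  continuousOn_T : ContinuousOn T (Ioo 0 H)
  T_pos : ∀ t ∈ Ioo 0 H, 0 < T t
  integrableOn_T : IntegrableOn T (Ioo 0 H)
  continuousOn_p : ContinuousOn p (Ioo 0 H)
  p_pos : ∀ s ∈ Ioo 0 H, 0 < p s
  tendsto_p : Tendsto p (𝓝[<] H) (𝓝 0)
  exists_tail_le : ∃ C, ∀ s ∈ Ioo 0 H, ∫ t in s..H, T t ≤ C * p s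

/-- A nonnegative bounded measurable right-hand side `q` for the linear problem `-(p φ')' = T q`. -/
structure IsFreidlinSource (H : ℝ) (q : ℝ → ℝ) : Prop where
  aemeasurable : AEMeasurable q (volume.restrict (Ioo 0 H))
  nonneg : ∀ t ∈ Ioo 0 H, 0 ≤ q t
  exists_le : ∃ B, ∀ t ∈ Ioo 0 H, q t ≤ B

/-- The flux `p φ'` of the solution of `-(p φ')' = T q` whose flux vanishes at `H`. -/
def freidlinFlux (H : ℝ) (T q : ℝ → ℝ) (s : ℝ) : ℝ := ∫ t in s..H, T t * q t

/-- The solution `𝒢[q]` of `-(p φ')' = T q` with `φ(0) = 0` and vanishing flux at `H`. -/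
def freidlinPotential (H : ℝ) (T p q : ℝ → ℝ) (h : ℝ) : ℝ :=
  ∫ s in (0 : ℝ)..h, freidlinFlux H T q s / p s

section Linear

variable {H : ℝ} {T p q q' : ℝ → ℝ}

theorem isFreidlinSource_const {c : ℝ} (hc : 0 ≤ c) : IsFreidlinSource H fun _ => c :=
  ⟨aemeasurable_const, fun _ _ => hc, c, fun _ _ => le_rfl⟩

theorem isFreidlinSource_one : IsFreidlinSource H 1 := isFreidlinSource_const zero_le_one

theorem freidlinFlux_const (c s : ℝ) :
    freidlinFlux H T (fun _ => c) s = c * freidlinFlux H T 1 s := by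
  simp [freidlinFlux, mul_comm c]

theorem freidlinPotential_const (c h : ℝ) :
    freidlinPotential H T p (fun _ => c) h = c * freidlinPotential H T p 1 h := by
  simp only [freidlinPotential, freidlinFlux_const, mul_div_assoc,
    intervalIntegral.integral_const_mul]

theorem freidlinPotential_zero : freidlinPotential H T p q 0 = 0 :=
  intervalIntegral.integral_same

namespace IsFreidlinWeight

theorem integrableOn_mul (W : IsFreidlinWeight H T p) (hq : IsFreidlinSource H q) :
    IntegrableOn (fun t => T t * q t) (Ioo 0 H) := by
  obtain ⟨B, hB⟩ := hq.exists_le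
  refine W.integrableOn_T.mul_bdd (c := B) hq.aemeasurable.aestronglyMeasurable ?_
  filter_upwards [ae_restrict_mem measurableSet_Ioo] with t ht
  rw [Real.norm_of_nonneg (hq.nonneg t ht)]
  exact hB t ht

theorem intervalIntegrable_mul (W : IsFreidlinWeight H T p) (hq : IsFreidlinSource H q) {s : ℝ}
    (hs : s ∈ Ioo 0 H) : IntervalIntegrable (fun t => T t * q t) volume s H :=
  intervalIntegrable_of_integrableOn_Ioo (W.integrableOn_mul hq) (Ioo_subset_Icc_self hs)
    (right_mem_Icc.2 W.pos.le)

theorem flux_mono (W : IsFreidlinWeight H T p) (hq : IsFreidlinSource H q)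
    (hq' : IsFreidlinSource H q') {s : ℝ} (hs : s ∈ Ioo 0 H)
    (hle : ∀ t ∈ Ioo s H, q t ≤ q' t) : freidlinFlux H T q s ≤ freidlinFlux H T q' s :=
  intervalIntegral.integral_mono_on_of_le_Ioo hs.2.le (W.intervalIntegrable_mul hq hs)
    (W.intervalIntegrable_mul hq' hs) fun t ht =>
      mul_le_mul_of_nonneg_left (hle t ht) (W.T_pos t ⟨hs.1.trans ht.1, ht.2⟩).le

theorem flux_one_pos (W : IsFreidlinWeight H T p) {s : ℝ} (hs : s ∈ Ioo 0 H) :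
    0 < freidlinFlux H T 1 s :=
  intervalIntegral.intervalIntegral_pos_of_pos_on
    (W.intervalIntegrable_mul isFreidlinSource_one hs)
    (fun t ht => by simpa using W.T_pos t ⟨hs.1.trans ht.1, ht.2⟩) hs.2

theorem slope_nonneg (W : IsFreidlinWeight H T p) (hq : IsFreidlinSource H q) {s : ℝ}
    (hs : s ∈ Ioo 0 H) : 0 ≤ freidlinFlux H T q s / p s := by
  have h := W.flux_mono (isFreidlinSource_const le_rfl) hq hs
    fun t ht => hq.nonneg t ⟨hs.1.trans ht.1, ht.2⟩
  rw [freidlinFlux_const, zero_mul] at h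
  exact div_nonneg h (W.p_pos s hs).le

theorem exists_slope_le (W : IsFreidlinWeight H T p) (hq : IsFreidlinSource H q) :
    ∃ K, ∀ s ∈ Ioo 0 H, freidlinFlux H T q s / p s ≤ K := by
  obtain ⟨B, hB⟩ := hq.exists_le
  obtain ⟨C, hC⟩ := W.exists_tail_le
  have hB₀ : 0 ≤ B := by
    have hmid : H / 2 ∈ Ioo 0 H := ⟨half_pos W.pos, half_lt_self W.pos⟩
    exact (hq.nonneg _ hmid).trans (hB _ hmid)
  refine ⟨B * C, fun s hs => (div_le_iff₀ (W.p_pos s hs)).2 ?_⟩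
  calc freidlinFlux H T q s
      ≤ freidlinFlux H T (fun _ => B) s := W.flux_mono hq (isFreidlinSource_const hB₀) hs
        fun t ht => hB t ⟨hs.1.trans ht.1, ht.2⟩
    _ = B * ∫ t in s..H, T t := by simp [freidlinFlux, mul_comm B]
    _ ≤ B * (C * p s) := mul_le_mul_of_nonneg_left (hC s hs) hB₀
    _ = B * C * p s := (mul_assoc _ _ _).symm

theorem continuousOn_slope (W : IsFreidlinWeight H T p) (hq : IsFreidlinSource H q) :
    ContinuousOn (fun s => freidlinFlux H T q s / p s) (Ioo 0 H) := by
  have hflux : ContinuousOn (freidlinFlux H T q) (uIcc 0 H) := by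
    refine intervalIntegral.continuousOn_primitive_interval_left ?_
    rw [uIcc_of_le W.pos.le, integrableOn_Icc_iff_integrableOn_Ioo]
    exact W.integrableOn_mul hq
  rw [uIcc_of_le W.pos.le] at hflux
  exact (hflux.mono Ioo_subset_Icc_self).div W.continuousOn_p fun s hs => (W.p_pos s hs).ne'

theorem integrableOn_slope (W : IsFreidlinWeight H T p) (hq : IsFreidlinSource H q) :
    IntegrableOn (fun s => freidlinFlux H T q s / p s) (Ioo 0 H) := by
  obtain ⟨K, hK⟩ := W.exists_slope_le hq
  refine Integrable.mono' (integrableOn_const (C := K) (by simp))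
    ((W.continuousOn_slope hq).aestronglyMeasurable measurableSet_Ioo) ?_
  filter_upwards [ae_restrict_mem measurableSet_Ioo] with s hs
  rw [Real.norm_of_nonneg (W.slope_nonneg hq hs)]
  exact hK s hs

theorem intervalIntegrable_slope (W : IsFreidlinWeight H T p) (hq : IsFreidlinSource H q)
    {a b : ℝ} (ha : a ∈ Icc 0 H) (hb : b ∈ Icc 0 H) :
    IntervalIntegrable (fun s => freidlinFlux H T q s / p s) volume a b :=
  intervalIntegrable_of_integrableOn_Ioo (W.integrableOn_slope hq) ha hb

theorem potential_mono (W : IsFreidlinWeight H T p) (hq : IsFreidlinSource H q)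
    (hq' : IsFreidlinSource H q') (hle : ∀ t ∈ Ioo 0 H, q t ≤ q' t) {h : ℝ} (hh : h ∈ Icc 0 H) :
    freidlinPotential H T p q h ≤ freidlinPotential H T p q' h := by
  have h₀ : (0 : ℝ) ∈ Icc 0 H := left_mem_Icc.2 W.pos.le
  refine intervalIntegral.integral_mono_on_of_le_Ioo hh.1 (W.intervalIntegrable_slope hq h₀ hh)
    (W.intervalIntegrable_slope hq' h₀ hh) fun s hs => ?_
  have hs' : s ∈ Ioo 0 H := ⟨hs.1, hs.2.trans_le hh.2⟩
  exact div_le_div_of_nonneg_right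
    (W.flux_mono hq hq' hs' fun t ht => hle t ⟨hs'.1.trans ht.1, ht.2⟩) (W.p_pos s hs').le

theorem continuousOn_potential (W : IsFreidlinWeight H T p) (hq : IsFreidlinSource H q) :
    ContinuousOn (freidlinPotential H T p q) (Icc 0 H) := by
  rw [← uIcc_of_le W.pos.le]
  refine intervalIntegral.continuousOn_primitive_interval ?_
  rw [uIcc_of_le W.pos.le, integrableOn_Icc_iff_integrableOn_Ioo]
  exact W.integrableOn_slope hq

theorem hasDerivAt_potential (W : IsFreidlinWeight H T p) (hq : IsFreidlinSource H q) {h : ℝ}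
    (hh : h ∈ Ioo 0 H) :
    HasDerivAt (freidlinPotential H T p q) (freidlinFlux H T q h / p h) h :=
  intervalIntegral.integral_hasDerivAt_right
    (W.intervalIntegrable_slope hq (left_mem_Icc.2 W.pos.le) (Ioo_subset_Icc_self hh))
    ((W.continuousOn_slope hq).stronglyMeasurableAtFilter isOpen_Ioo h hh)
    ((W.continuousOn_slope hq).continuousAt (isOpen_Ioo.mem_nhds hh))

theorem hasDerivAt_flux (W : IsFreidlinWeight H T p) (hq : IsFreidlinSource H q)
    (hqc : ContinuousOn q (Ioo 0 H)) {h : ℝ} (hh : h ∈ Ioo 0 H) :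
    HasDerivAt (freidlinFlux H T q) (-(T h * q h)) h := by
  have hc : ContinuousOn (fun t => T t * q t) (Ioo 0 H) := W.continuousOn_T.mul hqc
  exact intervalIntegral.integral_hasDerivAt_left (W.intervalIntegrable_mul hq hh)
    (hc.stronglyMeasurableAtFilter isOpen_Ioo h hh) (hc.continuousAt (isOpen_Ioo.mem_nhds hh))

theorem monotoneOn_potential (W : IsFreidlinWeight H T p) (hq : IsFreidlinSource H q) :
    MonotoneOn (freidlinPotential H T p q) (Icc 0 H) := by
  refine monotoneOn_of_deriv_nonneg (convex_Icc _ _) (W.continuousOn_potential hq) ?_ ?_ <;>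
    rw [interior_Icc] <;> intro h hh
  · exact (W.hasDerivAt_potential hq hh).differentiableAt.differentiableWithinAt
  · exact (W.hasDerivAt_potential hq hh).deriv ▸ W.slope_nonneg hq hh

theorem potential_nonneg (W : IsFreidlinWeight H T p) (hq : IsFreidlinSource H q) {h : ℝ}
    (hh : h ∈ Icc 0 H) : 0 ≤ freidlinPotential H T p q h :=
  freidlinPotential_zero.symm.trans_le
    (W.monotoneOn_potential hq (left_mem_Icc.2 W.pos.le) hh hh.1)

theorem potential_one_pos (W : IsFreidlinWeight H T p) {h : ℝ} (hh : h ∈ Ioc 0 H) :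
    0 < freidlinPotential H T p 1 h := by
  refine intervalIntegral.intervalIntegral_pos_of_pos_on (W.intervalIntegrable_slope
    isFreidlinSource_one (left_mem_Icc.2 W.pos.le) (Ioc_subset_Icc_self hh)) (fun s hs => ?_) hh.1
  have hs' : s ∈ Ioo 0 H := ⟨hs.1, hs.2.trans_le hh.2⟩
  exact div_pos (W.flux_one_pos hs') (W.p_pos s hs')

/-- `u` is compared as `a → 0⁺` instead of being evaluated at `0`, where a solution in the sense of
`IsFreidlinSol` need not be continuous. -/
theorem mul_potential_le_of_slope_le (W : IsFreidlinWeight H T p) (hq : IsFreidlinSource H q)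
    {u u' : ℝ → ℝ} {c : ℝ} (hu : ∀ h ∈ Ioo 0 H, HasDerivAt u (u' h) h)
    (hu₀ : ∀ h ∈ Ioo 0 H, 0 ≤ u h)
    (hle : ∀ h ∈ Ioo 0 H, c * (freidlinFlux H T q h / p h) ≤ u' h) {h : ℝ} (hh : h ∈ Ioo 0 H) :
    c * freidlinPotential H T p q h ≤ u h := by
  let d : ℝ → ℝ := fun x => u x - c * freidlinPotential H T p q x
  have hd : ∀ x ∈ Ioo 0 H, HasDerivAt d (u' x - c * (freidlinFlux H T q x / p x)) x :=
    fun x hx => (hu x hx).sub ((W.hasDerivAt_potential hq hx).const_mul c)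
  have hmono : MonotoneOn d (Ioo 0 H) := by
    refine monotoneOn_of_deriv_nonneg (convex_Ioo _ _)
      (fun x hx => (hd x hx).continuousAt.continuousWithinAt) ?_ ?_ <;>
      rw [interior_Ioo] <;> intro x hx
    · exact (hd x hx).differentiableAt.differentiableWithinAt
    · exact (hd x hx).deriv ▸ sub_nonneg.2 (hle x hx)
  have hlim : Tendsto (fun a => -(c * freidlinPotential H T p q a)) (𝓝[>] 0) (𝓝 0) := by
    have h₀ := (W.continuousOn_potential hq 0 (left_mem_Icc.2 W.pos.le)).mono Ioo_subset_Icc_self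
    rw [ContinuousWithinAt, nhdsWithin_Ioo_eq_nhdsGT W.pos, freidlinPotential_zero] at h₀
    simpa using (h₀.const_mul c).neg
  refine sub_nonneg.1 (le_of_tendsto hlim ?_ : 0 ≤ d h)
  filter_upwards [Ioo_mem_nhdsGT hh.1] with a ha
  have ha' : a ∈ Ioo 0 H := ⟨ha.1, ha.2.trans hh.2⟩
  calc -(c * freidlinPotential H T p q a) ≤ d a := by linarith [hu₀ a ha']
    _ ≤ d h := hmono ha' hh ha.2.le

end IsFreidlinWeight

end Linear

/-- The time `∫₀ˣ ds / g(s)` that the flow of `y' = g(y)` takes from `0` to `x`. -/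
def travelTime (g : ℝ → ℝ) (x : ℝ) : ℝ := ∫ s in (0 : ℝ)..x, 1 / g s

section TravelTime

variable {g : ℝ → ℝ}

theorem travelTime_nonneg (hgpos : ∀ s ∈ Ici 0, 0 < g s) {x : ℝ} (hx : 0 ≤ x) :
    0 ≤ travelTime g x :=
  intervalIntegral.integral_nonneg hx fun s hs => (one_div_pos.2 (hgpos s hs.1)).le

theorem travelTime_le_integral (hgpos : ∀ s ∈ Ici 0, 0 < g s)
    (hgint : IntegrableOn (fun s => 1 / g s) (Ici 0)) {x : ℝ} (hx : 0 ≤ x) :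
    travelTime g x ≤ ∫ s in Ici 0, 1 / g s := by
  rw [travelTime, intervalIntegral.integral_of_le hx]
  refine setIntegral_mono_set hgint ?_ (Ioc_subset_Ioi_self.trans Ioi_subset_Ici_self).eventuallyLE
  filter_upwards [ae_restrict_mem measurableSet_Ici] with s hs
  exact (one_div_pos.2 (hgpos s hs)).le

theorem hasDerivAt_travelTime (hgc : ContinuousOn g (Ici 0)) (hgpos : ∀ s ∈ Ici 0, 0 < g s)
    {x : ℝ} (hx : 0 < x) : HasDerivAt (travelTime g) (1 / g x) x := by
  have hc : ContinuousOn (fun s => 1 / g s) (Ici 0) :=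
    continuousOn_const.div hgc fun s hs => (hgpos s hs).ne'
  refine intervalIntegral.integral_hasDerivAt_right (hc.mono ?_).intervalIntegrable
    ((hc.mono Ioi_subset_Ici_self).stronglyMeasurableAtFilter isOpen_Ioi x hx)
    (hc.continuousAt (Ici_mem_nhds hx))
  rw [uIcc_of_le hx.le]
  exact Icc_subset_Ici_self

end TravelTime

section Nonlinear

variable {H lam : ℝ} {T p g f φ ψ : ℝ → ℝ}

theorem isFreidlinSource_comp (hgm : MonotoneOn g (Ici 0)) (hg0 : 0 ≤ g 0)
    (hf : AEMeasurable f (volume.restrict (Ioo 0 H))) {M : ℝ}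
    (hfM : ∀ t ∈ Ioo 0 H, f t ∈ Icc 0 M) : IsFreidlinSource H fun t => g (f t) := by
  have hmono : Monotone fun x => g (max 0 x) := fun x y hxy =>
    hgm (le_max_left 0 x) (le_max_left 0 y) (max_le_max_left 0 hxy)
  refine ⟨(hmono.measurable.comp_aemeasurable hf).congr ?_, fun t ht => ?_, g M, fun t ht => ?_⟩
  · filter_upwards [ae_restrict_mem measurableSet_Ioo] with t ht
    simp only [Function.comp_apply, max_eq_right (hfM t ht).1]
  · exact hg0.trans (hgm self_mem_Ici (hfM t ht).1 (hfM t ht).1)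
  · exact hgm (hfM t ht).1 ((hfM t ht).1.trans (hfM t ht).2) (hfM t ht).2

namespace IsFreidlinSol

theorem continuousOn (hs : IsFreidlinSol H T p g lam φ) : ContinuousOn φ (Ioo 0 H) :=
  fun h hh => (hs.2.2.1 h hh).continuousAt.continuousWithinAt

theorem exists_mem_Icc (hs : IsFreidlinSol H T p g lam φ) :
    ∃ M, ∀ t ∈ Ioo 0 H, φ t ∈ Icc 0 M := by
  obtain ⟨⟨M, hM⟩, hnonneg, -⟩ := hs
  exact ⟨M, fun t ht => ⟨hnonneg t (Ioo_subset_Ico_self ht),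
    (le_abs_self _).trans (hM t (Ioo_subset_Ico_self ht))⟩⟩

theorem nonneg (hs : IsFreidlinSol H T p g lam φ) {t : ℝ} (ht : t ∈ Ioo 0 H) : 0 ≤ φ t :=
  hs.2.1 t (Ioo_subset_Ico_self ht)

theorem isFreidlinSource (hs : IsFreidlinSol H T p g lam φ) (hgm : MonotoneOn g (Ici 0))
    (hg0 : 0 ≤ g 0) : IsFreidlinSource H fun t => g (φ t) :=
  isFreidlinSource_comp hgm hg0 (hs.continuousOn.aemeasurable measurableSet_Ioo)
    hs.exists_mem_Icc.choose_spec

theorem tendsto_mul_deriv (hs : IsFreidlinSol H T p g lam φ) (hH : 0 < H)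
    (hp : Tendsto p (𝓝[<] H) (𝓝 0)) : Tendsto (fun t => p t * deriv φ t) (𝓝[<] H) (𝓝 0) := by
  obtain ⟨-, -, -, -, -, -, -, K, hK⟩ := hs
  refine squeeze_zero_norm' ?_ (by simpa using hp.abs.mul_const K)
  filter_upwards [Ioo_mem_nhdsLT hH] with t ht
  rw [Real.norm_eq_abs, abs_mul]
  exact mul_le_mul_of_nonneg_left (hK t ht) (abs_nonneg _)

theorem mul_deriv_eq_flux (hs : IsFreidlinSol H T p g lam φ) (W : IsFreidlinWeight H T p)
    (hgm : MonotoneOn g (Ici 0)) (hg0 : 0 ≤ g 0) {h : ℝ} (hh : h ∈ Ioo 0 H) :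
    p h * deriv φ h = lam * freidlinFlux H T (fun t => g (φ t)) h := by
  have ⟨_, _, _, _, hdiff, heq, _⟩ := hs
  have hderiv : ∀ t ∈ Ioo h H,
      HasDerivAt (fun t => p t * deriv φ t) (-(lam * (T t * g (φ t)))) t := fun t ht => by
    have ht' : t ∈ Ioo 0 H := ⟨hh.1.trans ht.1, ht.2⟩
    rw [← mul_assoc, ← heq t ht', neg_neg]
    exact (hdiff t ht').hasDerivAt
  have hint := W.intervalIntegrable_mul (hs.isFreidlinSource hgm hg0) hh
  have key := intervalIntegral.integral_eq_sub_of_hasDerivAt_of_tendsto hh.2 hderiv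
    (hint.const_mul lam).neg ((hdiff h hh).continuousAt.tendsto.mono_left nhdsWithin_le_nhds)
    (hs.tendsto_mul_deriv W.pos W.tendsto_p)
  rw [intervalIntegral.integral_neg, intervalIntegral.integral_const_mul] at key
  rw [freidlinFlux]
  linarith

theorem hasDerivAt (hs : IsFreidlinSol H T p g lam φ) (W : IsFreidlinWeight H T p)
    (hgm : MonotoneOn g (Ici 0)) (hg0 : 0 ≤ g 0) {h : ℝ} (hh : h ∈ Ioo 0 H) :
    HasDerivAt φ (lam * (freidlinFlux H T (fun t => g (φ t)) h / p h)) h := by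
  rw [← mul_div_assoc, ← hs.mul_deriv_eq_flux W hgm hg0 hh,
    mul_div_cancel_left₀ _ (W.p_pos h hh).ne']
  exact (hs.2.2.1 h hh).hasDerivAt

theorem monotoneOn (hs : IsFreidlinSol H T p g lam φ) (W : IsFreidlinWeight H T p)
    (hgm : MonotoneOn g (Ici 0)) (hg0 : 0 ≤ g 0) (hlam : 0 ≤ lam) :
    MonotoneOn φ (Ioo 0 H) := by
  refine monotoneOn_of_deriv_nonneg (convex_Ioo _ _) hs.continuousOn ?_ ?_ <;>
    rw [interior_Ioo] <;> intro h hh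
  · exact (hs.2.2.1 h hh).differentiableWithinAt
  · rw [(hs.hasDerivAt W hgm hg0 hh).deriv]
    exact mul_nonneg hlam (W.slope_nonneg (hs.isFreidlinSource hgm hg0) hh)

theorem mul_potential_le (hs : IsFreidlinSol H T p g lam φ) (W : IsFreidlinWeight H T p)
    (hgm : MonotoneOn g (Ici 0)) (hg0 : 0 ≤ g 0) {μ : ℝ} (hμ : μ ≤ lam) {h : ℝ}
    (hh : h ∈ Ioo 0 H) : μ * freidlinPotential H T p (fun t => g (φ t)) h ≤ φ h := by
  have hq := hs.isFreidlinSource hgm hg0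
  exact W.mul_potential_le_of_slope_le hq (fun x hx => hs.hasDerivAt W hgm hg0 hx)
    (fun x hx => hs.nonneg hx)
    (fun x hx => mul_le_mul_of_nonneg_right hμ (W.slope_nonneg hq hx)) hh

theorem pos (hs : IsFreidlinSol H T p g lam φ) (W : IsFreidlinWeight H T p)
    (hgm : MonotoneOn g (Ici 0)) (hg0 : 0 < g 0) (hlam : 0 < lam) {h : ℝ} (hh : h ∈ Ioo 0 H) :
    0 < φ h := by
  have hτ := W.potential_one_pos (Ioo_subset_Ioc_self hh)
  calc 0 < lam * (g 0 * freidlinPotential H T p 1 h) := by positivity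
    _ = lam * freidlinPotential H T p (fun _ => g 0) h := by rw [freidlinPotential_const]
    _ ≤ lam * freidlinPotential H T p (fun t => g (φ t)) h :=
      mul_le_mul_of_nonneg_left (W.potential_mono (isFreidlinSource_const hg0.le)
        (hs.isFreidlinSource hgm hg0.le)
        (fun t ht => hgm self_mem_Ici (hs.nonneg ht) (hs.nonneg ht)) (Ioo_subset_Icc_self hh))
        hlam.le
    _ ≤ φ h := hs.mul_potential_le W hgm hg0.le le_rfl hh

theorem mul_flux_one_le (hs : IsFreidlinSol H T p g lam φ) (W : IsFreidlinWeight H T p)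
    (hgm : MonotoneOn g (Ici 0)) (hg0 : 0 ≤ g 0) (hlam : 0 ≤ lam) {h : ℝ} (hh : h ∈ Ioo 0 H) :
    g (φ h) * freidlinFlux H T 1 h ≤ freidlinFlux H T (fun t => g (φ t)) h := by
  have hq := hs.isFreidlinSource hgm hg0
  rw [← freidlinFlux_const]
  refine W.flux_mono (isFreidlinSource_const (hq.nonneg h hh)) hq hh fun t ht => ?_
  have ht' : t ∈ Ioo 0 H := ⟨hh.1.trans ht.1, ht.2⟩
  exact hgm (hs.nonneg hh) (hs.nonneg ht') (hs.monotoneOn W hgm hg0 hlam hh ht' ht.1.le)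

theorem mul_potential_one_le_integral (hs : IsFreidlinSol H T p g lam φ)
    (W : IsFreidlinWeight H T p) (hgc : ContinuousOn g (Ici 0)) (hgm : MonotoneOn g (Ici 0))
    (hg0 : 0 < g 0) (hgint : IntegrableOn (fun s => 1 / g s) (Ici 0)) (hlam : 0 < lam)
    {h : ℝ} (hh : h ∈ Ioo 0 H) :
    lam * freidlinPotential H T p 1 h ≤ ∫ s in Ici 0, 1 / g s := by
  have hgpos : ∀ s ∈ Ici 0, 0 < g s := fun s hs => hg0.trans_le (hgm self_mem_Ici hs hs)
  refine le_trans ?_ (travelTime_le_integral hgpos hgint (hs.nonneg hh))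
  refine W.mul_potential_le_of_slope_le (u := fun x => travelTime g (φ x)) isFreidlinSource_one
    (fun x hx => (hasDerivAt_travelTime hgc hgpos (hs.pos W hgm hg0 hlam hx)).comp x
      (hs.hasDerivAt W hgm hg0.le hx))
    (fun x hx => travelTime_nonneg hgpos (hs.nonneg hx)) (fun x hx => ?_) hh
  have hgx := hgpos _ (hs.nonneg hx)
  have hpx := W.p_pos x hx
  rw [one_div_mul_eq_div, le_div_iff₀ hgx, mul_assoc, div_mul_eq_mul_div,
    mul_comm (freidlinFlux H T 1 x)]
  have := hs.mul_flux_one_le W hgm hg0.le hlam.le hx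
  gcongr

end IsFreidlinSol

theorem isFreidlinSol_mul_potential (W : IsFreidlinWeight H T p) (hgc : ContinuousOn g (Ici 0))
    (hf0 : ∀ h ∈ Ioo 0 H, 0 ≤ f h) (hq : IsFreidlinSource H fun t => g (f t)) (hlam : 0 ≤ lam)
    (hfix : ∀ h ∈ Ioo 0 H, lam * freidlinPotential H T p (fun t => g (f t)) h = f h) :
    IsFreidlinSol H T p g lam
      fun h => lam * freidlinPotential H T p (fun t => g (f t)) h := by
  set q : ℝ → ℝ := fun t => g (f t)
  set φ : ℝ → ℝ := fun h => lam * freidlinPotential H T p q h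
  have hfc : ContinuousOn f (Ioo 0 H) :=
    (((W.continuousOn_potential hq).mono Ioo_subset_Icc_self).const_mul lam).congr
      fun h hh => (hfix h hh).symm
  have hqc : ContinuousOn q (Ioo 0 H) := hgc.comp hfc hf0
  have hφ : ∀ h ∈ Ioo 0 H, HasDerivAt φ (lam * (freidlinFlux H T q h / p h)) h :=
    fun h hh => (W.hasDerivAt_potential hq hh).const_mul lam
  have hflux : ∀ h ∈ Ioo 0 H,
      HasDerivAt (fun t => p t * deriv φ t) (lam * -(T h * q h)) h := fun h hh => by
    refine ((W.hasDerivAt_flux hq hqc hh).const_mul lam).congr_of_eventuallyEq ?_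
    filter_upwards [isOpen_Ioo.mem_nhds hh] with s hs
    rw [(hφ s hs).deriv, mul_left_comm, mul_div_cancel₀ _ (W.p_pos s hs).ne']
  have hφ_nonneg : ∀ h ∈ Icc 0 H, 0 ≤ φ h := fun h hh =>
    mul_nonneg hlam (W.potential_nonneg hq hh)
  refine ⟨⟨φ H, fun h hh => ?_⟩, fun h hh => hφ_nonneg h (Ico_subset_Icc_self hh),
    fun h hh => (hφ h hh).differentiableAt, fun h hh => ?_,
    fun h hh => (hflux h hh).differentiableAt, fun h hh => ?_, ?_, ?_⟩
  · rw [abs_of_nonneg (hφ_nonneg h (Ico_subset_Icc_self hh))]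
    exact mul_le_mul_of_nonneg_left (W.monotoneOn_potential hq (Ico_subset_Icc_self hh)
      (right_mem_Icc.2 W.pos.le) hh.2.le) hlam
  · have hnhds : Ioo 0 H ∈ 𝓝 h := isOpen_Ioo.mem_nhds hh
    refine (((W.continuousOn_slope hq).continuousAt hnhds).const_mul lam).congr ?_
    filter_upwards [hnhds] with s hs using (hφ s hs).deriv.symm
  · rw [(hflux h hh).deriv, show φ h = f h from hfix h hh]
    ring
  · exact mul_eq_zero_of_right lam freidlinPotential_zero
  · obtain ⟨K, hK⟩ := W.exists_slope_le hq
    refine ⟨lam * K, fun h hh => ?_⟩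
    rw [(hφ h hh).deriv, abs_of_nonneg (mul_nonneg hlam (W.slope_nonneg hq hh))]
    exact mul_le_mul_of_nonneg_left (hK h hh) hlam

theorem exists_isFreidlinSol_of_supersolution (W : IsFreidlinWeight H T p)
    (hgc : ContinuousOn g (Ici 0)) (hgm : MonotoneOn g (Ici 0)) (hg0 : 0 ≤ g 0)
    (hlam : 0 ≤ lam) (hψm : MonotoneOn ψ (Ioo 0 H)) {M : ℝ}
    (hψM : ∀ h ∈ Ioo 0 H, ψ h ∈ Icc 0 M)
    (hsuper : ∀ h ∈ Ioo 0 H, lam * freidlinPotential H T p (fun t => g (ψ t)) h ≤ ψ h) :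
    ∃ φ, IsFreidlinSol H T p g lam φ := by
  let F : (ℝ → ℝ) → ℝ → ℝ := fun f h => lam * freidlinPotential H T p (fun t => g (f t)) h
  let A : Set (ℝ → ℝ) := monotoneBetween (Ioo 0 H) 0 ψ
  have hzero : (0 : ℝ → ℝ) ∈ A := ⟨monotoneOn_const, fun h hh => ⟨le_rfl, (hψM h hh).1⟩⟩
  have hψA : ψ ∈ A := ⟨hψm, fun h hh => ⟨(hψM h hh).1, le_rfl⟩⟩
  have hsource : ∀ f ∈ A, IsFreidlinSource H fun t => g (f t) := fun f hf =>
    isFreidlinSource_comp hgm hg0 (aemeasurable_restrict_of_monotoneOn measurableSet_Ioo hf.1)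
      fun t ht => ⟨(hf.2 t ht).1, (hf.2 t ht).2.trans (hψM t ht).2⟩
  have hF_mono : ∀ f ∈ A, ∀ f' ∈ A, (∀ h ∈ Ioo 0 H, f h ≤ f' h) → ∀ h ∈ Ioo 0 H, F f h ≤ F f' h :=
    fun f hf f' hf' hle h hh => mul_le_mul_of_nonneg_left
      (W.potential_mono (hsource f hf) (hsource f' hf')
        (fun t ht => hgm (hf.2 t ht).1 (hf'.2 t ht).1 (hle t ht)) (Ioo_subset_Icc_self hh)) hlam
  have hF_maps : MapsTo F A A := fun f hf =>
    ⟨fun x hx y hy hxy => mul_le_mul_of_nonneg_left (W.monotoneOn_potential (hsource f hf)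
        (Ioo_subset_Icc_self hx) (Ioo_subset_Icc_self hy) hxy) hlam,
      fun h hh =>
        ⟨mul_nonneg hlam (W.potential_nonneg (hsource f hf) (Ioo_subset_Icc_self hh)),
          (hF_mono f hf ψ hψA (fun t ht => (hf.2 t ht).2) h hh).trans (hsuper h hh)⟩⟩
  obtain ⟨f, hf, hfix⟩ := exists_fixedPoint_of_mapsTo_monotoneBetween hzero hF_maps hF_mono
  exact ⟨F f, isFreidlinSol_mul_potential W hgc (fun h hh => (hf.2 h hh).1) (hsource f hf) hlam
    hfix⟩

theorem IsFreidlinSol.exists_of_le (hs : IsFreidlinSol H T p g lam φ) (W : IsFreidlinWeight H T p)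
    (hgc : ContinuousOn g (Ici 0)) (hgm : MonotoneOn g (Ici 0)) (hg0 : 0 ≤ g 0) {μ : ℝ}
    (hμ : 0 ≤ μ) (hle : μ ≤ lam) : ∃ φ', IsFreidlinSol H T p g μ φ' := by
  obtain ⟨M, hM⟩ := hs.exists_mem_Icc
  exact exists_isFreidlinSol_of_supersolution W hgc hgm hg0 hμ
    (hs.monotoneOn W hgm hg0 (hμ.trans hle)) hM
    fun h hh => hs.mul_potential_le W hgm hg0 hle hh

theorem exists_isFreidlinSol_of_const_supersolution (W : IsFreidlinWeight H T p)
    (hgc : ContinuousOn g (Ici 0)) (hgm : MonotoneOn g (Ici 0)) (hg0 : 0 ≤ g 0)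
    (hlam : 0 ≤ lam) {M : ℝ} (hM : 0 ≤ M) (hle : lam * (g M * freidlinPotential H T p 1 H) ≤ M) :
    ∃ φ, IsFreidlinSol H T p g lam φ := by
  refine exists_isFreidlinSol_of_supersolution W hgc hgm hg0 hlam (ψ := fun _ => M)
    monotoneOn_const (fun _ _ => ⟨hM, le_rfl⟩) fun h hh => ?_
  have hgM : 0 ≤ g M := hg0.trans (hgm self_mem_Ici hM hM)
  have hτ := W.monotoneOn_potential isFreidlinSource_one (Ioo_subset_Icc_self hh)
    (right_mem_Icc.2 W.pos.le) hh.2.le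
  rw [freidlinPotential_const]
  exact le_trans (by gcongr) hle

theorem freidlin_threshold_exists_general (W : IsFreidlinWeight H T p)
    (hgc : ContinuousOn g (Ici 0)) (hgm : MonotoneOn g (Ici 0)) (hg0 : 0 < g 0)
    (hgint : IntegrableOn (fun s => 1 / g s) (Ici 0)) :
    ∃ lamStar : ℝ, 0 < lamStar ∧
      (∀ lam : ℝ, 0 ≤ lam → lam < lamStar →
        ∃ φ : ℝ → ℝ, IsFreidlinSol H T p g lam φ ∧ (0 < lam → ∀ h ∈ Ioo (0 : ℝ) H, 0 < φ h)) ∧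
      (∀ lam : ℝ, lamStar < lam → ¬ ∃ φ : ℝ → ℝ, IsFreidlinSol H T p g lam φ) := by
  let S : Set ℝ := {lam | 0 < lam ∧ ∃ φ, IsFreidlinSol H T p g lam φ}
  have hbdd : BddAbove S := by
    have hmid : H / 2 ∈ Ioo 0 H := ⟨half_pos W.pos, half_lt_self W.pos⟩
    refine ⟨(∫ s in Ici 0, 1 / g s) / freidlinPotential H T p 1 (H / 2), ?_⟩
    rintro lam ⟨hlam, φ, hs⟩
    rw [le_div_iff₀ (W.potential_one_pos (Ioo_subset_Ioc_self hmid))]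
    exact hs.mul_potential_one_le_integral W hgc hgm hg0 hgint hlam hmid
  obtain ⟨lam₀, hlam₀⟩ : S.Nonempty := by
    have hg1 : 0 < g 1 := hg0.trans_le (hgm self_mem_Ici (mem_Ici.2 zero_le_one) zero_le_one)
    have hD := mul_pos hg1 (W.potential_one_pos (right_mem_Ioc.2 W.pos))
    exact ⟨_, inv_pos.2 hD, exists_isFreidlinSol_of_const_supersolution W hgc hgm hg0.le
      (inv_pos.2 hD).le zero_le_one (inv_mul_cancel₀ hD.ne').le⟩
  have hpos : 0 < sSup S := hlam₀.1.trans_le (le_csSup hbdd hlam₀)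
  refine ⟨sSup S, hpos, fun lam hlam hlt => ?_, fun lam hlt hex =>
    (le_csSup hbdd ⟨hpos.trans hlt, hex⟩).not_gt hlt⟩
  obtain ⟨lam', ⟨-, ψ, hψ⟩, hlt'⟩ := exists_lt_of_lt_csSup ⟨lam₀, hlam₀⟩ hlt
  obtain ⟨φ, hφ⟩ := hψ.exists_of_le W hgc hgm hg0.le hlam hlt'.le
  exact ⟨φ, hφ, fun hlam' h hh => hφ.pos W hgm hg0 hlam' hh⟩

end Nonlinear

section LogBound

variable {H : ℝ} {T p : ℝ → ℝ}

theorem integrableOn_of_abs_le_one_add_abs_log (hT : ContinuousOn T (Ioc 0 H)) {T₁ : ℝ}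
    (hub : ∀ h ∈ Ioc 0 H, |T h| ≤ T₁ * (1 + |Real.log h|)) : IntegrableOn T (Ioc 0 H) := by
  have hlog : IntegrableOn Real.log (Ioc 0 H) :=
    (intervalIntegral.intervalIntegrable_log' (a := 0) (b := H)).1
  have hbound : IntegrableOn (fun h => T₁ * (1 + |Real.log h|)) (Ioc 0 H) :=
    ((integrableOn_const (by simp)).add hlog.abs).const_mul T₁
  refine Integrable.mono' hbound (hT.aestronglyMeasurable measurableSet_Ioc) ?_
  filter_upwards [ae_restrict_mem measurableSet_Ioc] with t ht using hub t ht

theorem exists_tail_le_of_linear_le (hH : 0 < H) (hT : ContinuousOn T (Ioc 0 H))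
    (hTint : IntegrableOn T (Ioo 0 H)) (hp : ContinuousOn p (Ico 0 H))
    (hppos : ∀ h ∈ Ico 0 H, 0 < p h) {c : ℝ} (hc : 0 < c)
    (hplb : ∀ h ∈ Ico (H / 2) H, c * (H - h) ≤ p h) :
    ∃ C, ∀ s ∈ Ioo 0 H, ∫ t in s..H, T t ≤ C * p s := by
  have hhalf : H / 2 < H := half_lt_self hH
  have htail : ContinuousOn (fun s => ∫ t in s..H, T t) (Icc 0 H) := by
    rw [← uIcc_of_le hH.le]
    refine intervalIntegral.continuousOn_primitive_interval_left ?_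
    rwa [uIcc_of_le hH.le, integrableOn_Icc_iff_integrableOn_Ioo]
  have hleft : Icc 0 (H / 2) ⊆ Ico 0 H := Icc_subset_Ico_right hhalf
  obtain ⟨A, hA⟩ := isCompact_Icc.exists_bound_of_continuousOn
    ((htail.mono (hleft.trans Ico_subset_Icc_self)).div (hp.mono hleft)
      fun s hs => (hppos s (hleft hs)).ne')
  obtain ⟨B, hB⟩ := isCompact_Icc.exists_bound_of_continuousOn
    (hT.mono (Icc_subset_Ioc_iff hhalf.le |>.2 ⟨half_pos hH, le_rfl⟩))
  have hB₀ : 0 ≤ B := (norm_nonneg _).trans (hB H (right_mem_Icc.2 hhalf.le))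
  refine ⟨max A (B / c), fun s hs => ?_⟩
  have hps := hppos s (Ioo_subset_Ico_self hs)
  rcases le_total s (H / 2) with hsH | hsH
  · calc ∫ t in s..H, T t ≤ A * p s :=
        (div_le_iff₀ hps).1 ((Real.le_norm_self _).trans (hA s ⟨hs.1.le, hsH⟩))
      _ ≤ max A (B / c) * p s := by gcongr; exact le_max_left _ _
  · calc ∫ t in s..H, T t ≤ B * |H - s| :=
        (Real.le_norm_self _).trans <| intervalIntegral.norm_integral_le_of_norm_le_const
          fun t ht => by
            rw [uIoc_of_le hs.2.le] at ht
            exact hB t ⟨hsH.trans ht.1.le, ht.2⟩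
      _ = B / c * (c * (H - s)) := by
        rw [abs_of_pos (sub_pos.2 hs.2)]
        field_simp
      _ ≤ B / c * p s := by gcongr; exact hplb s ⟨hsH, hs.2⟩
      _ ≤ max A (B / c) * p s := by gcongr; exact le_max_right _ _

theorem tendsto_zero_of_le_linear (hH : 0 < H) (hppos : ∀ h ∈ Ico 0 H, 0 < p h) {c : ℝ}
    (hpub : ∀ h ∈ Ico (H / 2) H, p h ≤ c * (H - h)) : Tendsto p (𝓝[<] H) (𝓝 0) := by
  have hlim : Tendsto (fun h => c * (H - h)) (𝓝[<] H) (𝓝 0) :=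
    tendsto_nhdsWithin_of_tendsto_nhds
      ((by fun_prop : Continuous fun h => c * (H - h)).tendsto' H 0 (by simp))
  have hmem : Ioo (H / 2) H ∈ 𝓝[<] H := Ioo_mem_nhdsLT (half_lt_self hH)
  refine squeeze_zero' ?_ ?_ hlim <;> filter_upwards [hmem] with h hh
  · exact (hppos h ⟨(half_pos hH).le.trans hh.1.le, hh.2⟩).le
  · exact hpub h (Ioo_subset_Ico_self hh)

theorem isFreidlinWeight_of_log_bound (hH : 0 < H) (hT : ContinuousOn T (Ioc 0 H)) {T₁ : ℝ}
    (hTpos : ∀ h ∈ Ioc 0 H, 0 < T h) (hTub : ∀ h ∈ Ioc 0 H, T h ≤ T₁ * (1 + |Real.log h|))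
    (hp : ContinuousOn p (Ico 0 H)) (hppos : ∀ h ∈ Ico 0 H, 0 < p h) {c₁ c₂ : ℝ} (hc₁ : 0 < c₁)
    (hplb : ∀ h ∈ Ico (H / 2) H, c₁ * (H - h) ≤ p h)
    (hpub : ∀ h ∈ Ico (H / 2) H, p h ≤ c₂ * (H - h)) : IsFreidlinWeight H T p := by
  have hTint : IntegrableOn T (Ioo 0 H) :=
    (integrableOn_of_abs_le_one_add_abs_log hT fun h hh =>
      (abs_of_pos (hTpos h hh)).trans_le (hTub h hh)).mono_set Ioo_subset_Ioc_self
  exact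
    { pos := hH
      continuousOn_T := hT.mono Ioo_subset_Ioc_self
      T_pos := fun t ht => hTpos t (Ioo_subset_Ioc_self ht)
      integrableOn_T := hTint
      continuousOn_p := hp.mono Ioo_subset_Ico_self
      p_pos := fun s hs => hppos s (Ioo_subset_Ico_self hs)
      tendsto_p := tendsto_zero_of_le_linear hH hppos hpub
      exists_tail_le := exists_tail_le_of_linear_le hH hT hTint hp hppos hc₁ hplb }

end LogBound

/-- The effective (Freidlin) explosion problem on `[0, H₀)` has a
finite positive explosion threshold `λ̄*`: for `0 ≤ λ < λ̄*` it admits a bounded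
nonnegative solution (positive on `(0,H₀)` when `λ > 0`), while for `λ > λ̄*` no such
positive solution exists. -/
theorem freidlin_threshold_exists (g : ℝ → ℝ)
    (hg : ContDiff ℝ 2 g) (hg0 : 0 < g 0) (hg0' : 0 < deriv g 0)
    (hgmono : StrictMonoOn g (Ici 0)) (hgconv : ConvexOn ℝ (Ici 0) g)
    (hgint : IntegrableOn (fun s => 1 / g s) (Ici 0))
    (H₀ : ℝ) (hH₀ : 0 < H₀)
    (T : ℝ → ℝ) (hTcont : ContinuousOn T (Ioc 0 H₀))
    (T₀ T₁ : ℝ) (hT₀ : 0 < T₀) (hT₁ : 0 < T₁)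
    (hTlb : ∀ h ∈ Ioc (0 : ℝ) H₀, T₀ ≤ T h)
    (hTub : ∀ h ∈ Ioc (0 : ℝ) H₀, T h ≤ T₁ * (1 + |Real.log h|))
    (p : ℝ → ℝ) (hpcont : ContinuousOn p (Ico 0 H₀))
    (hppos : ∀ h ∈ Ico (0 : ℝ) H₀, 0 < p h)
    (c₁ c₂ : ℝ) (hc₁ : 0 < c₁) (hc₂ : 0 < c₂)
    (hplb : ∀ h ∈ Ico (H₀ / 2) H₀, c₁ * (H₀ - h) ≤ p h)
    (hpub : ∀ h ∈ Ico (H₀ / 2) H₀, p h ≤ c₂ * (H₀ - h)) :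
    ∃ lamStar : ℝ, 0 < lamStar ∧
      (∀ lam : ℝ, 0 ≤ lam → lam < lamStar →
        ∃ φ : ℝ → ℝ, IsFreidlinSol H₀ T p g lam φ ∧
          (0 < lam → ∀ h ∈ Ioo (0 : ℝ) H₀, 0 < φ h)) ∧
      (∀ lam : ℝ, lamStar < lam →
        ¬ ∃ φ : ℝ → ℝ, IsFreidlinSol H₀ T p g lam φ ∧
          ∀ h ∈ Ioo (0 : ℝ) H₀, 0 < φ h) := by
  obtain ⟨lamStar, hpos, hex, hnone⟩ := freidlin_threshold_exists_general
    (isFreidlinWeight_of_log_bound hH₀ hTcont (fun h hh => hT₀.trans_le (hTlb h hh)) hTub hpcont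
      hppos hc₁ hplb hpub) hg.continuous.continuousOn hgmono.monotoneOn hg0 hgint
  exact ⟨lamStar, hpos, hex, fun lam hlt ⟨φ, hφ, _⟩ => hnone lam hlt ⟨φ, hφ⟩⟩
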